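/- Let n ∈ ℕ and α a partition of n. The Smith normal form of the submatrix X^(α) = (χ^λ_μ)_{λ,μ ≥ α} of the character table of S_n equals the Smith normal form of the diagonal matrix with entries b_μ for μ ≥ α. -/

import Mathlib

open scoped Classical

namespace SnTable

variable {n : ℕ}

/-- The parts of a partition, listed in weakly decreasing order. -/
def descList (μ : Nat.Partition n) : List ℕ := (μ.parts.sort (· ≤ ·)).reverse

/-- Strict lexicographic order on partitions of `n` (comparing the lists of parts
written in decreasing order). -/
def plex (μ ν : Nat.Partition n) : Prop := List.Lex (· < ·) (descList μ) (descList ν)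

/-- Weak lexicographic order on partitions of `n`. -/
def plexLE (μ ν : Nat.Partition n) : Prop := μ = ν ∨ plex μ ν

/-- `a_μ = ∏ i^{m_i(μ)}`, the product of the parts of `μ`. -/
def aNum (μ : Nat.Partition n) : ℕ := μ.parts.prod

/-- `b_μ = ∏ m_i(μ)!`, the product of the factorials of the multiplicities. -/
def bNum (μ : Nat.Partition n) : ℕ :=
  ∏ i ∈ μ.parts.toFinset, (μ.parts.count i).factorial

/-- `z_μ = a_μ b_μ`, the centralizer order of an element of cycle type `μ` in `S_n`. -/
def zNum (μ : Nat.Partition n) : ℕ := aNum μ * bNum μ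

/-- The cycle type of a permutation of `Fin n`, as a partition of `n`. -/
def cycleTypePartition (g : Equiv.Perm (Fin n)) : Nat.Partition n :=
  (Fintype.card_fin n) ▸ g.partition

/-- The value at `g` of the permutation character `ξ^λ` of `S_n` obtained by inducing the
trivial character from the Young subgroup `S_λ`: it counts the ordered set partitions of
`Fin n` with block sizes `λ₁ ≥ λ₂ ≥ …` that are fixed by `g`. -/
def permChar (lam : Nat.Partition n) (g : Equiv.Perm (Fin n)) : ℕ :=
  Fintype.card {f : Fin n → Fin (descList lam).length //
    (∀ x, f (g x) = f x) ∧
    ∀ j, (Finset.univ.filter fun x => f x = j).card = (descList lam).get j}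

/-- `X` is the character table of the symmetric group `S_n`, with rows and columns indexed
by the partitions of `n`: each row is an irreducible character (as a class function, via
cycle types), distinct rows are distinct characters, and the labelling is the standard one,
pinned down by the fact that the transition matrix expressing the Young permutation
characters `ξ^λ` in terms of the rows of `X` is unitriangular with respect to the
lexicographic order. -/
def IsCharTable (X : Nat.Partition n → Nat.Partition n → ℤ) : Prop :=
  (∀ lam : Nat.Partition n, ∃ V : FDRep ℂ (Equiv.Perm (Fin n)),
      CategoryTheory.Simple V ∧
      ∀ g : Equiv.Perm (Fin n), V.character g = (X lam (cycleTypePartition g) : ℂ)) ∧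
  (∃ d : Nat.Partition n → Nat.Partition n → ℤ,
      (∀ lam, d lam lam = 1) ∧
      (∀ lam mu, d lam mu ≠ 0 → plexLE lam mu) ∧
      (∀ lam (g : Equiv.Perm (Fin n)),
        (permChar lam g : ℤ) = ∑ mu, d lam mu * X mu (cycleTypePartition g))) ∧
  Function.Injective X


theorem descList_coe (μ : Nat.Partition n) : (descList μ : Multiset ℕ) = μ.parts := by
  unfold descList
  rw [Multiset.coe_reverse, Multiset.sort_eq]

theorem map_get_univ (l : List ℕ) :
    (Finset.univ : Finset (Fin l.length)).val.map l.get = (l : Multiset ℕ) := by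
  rw [Fin.univ_val_map, List.ofFn_get]

theorem map_descList_get (μ : Nat.Partition n) :
    (Finset.univ : Finset (Fin (descList μ).length)).val.map (descList μ).get = μ.parts := by
  rw [map_get_univ, descList_coe]

theorem descList_injective : Function.Injective (descList (n := n)) := by
  intro μ ν h
  apply Nat.Partition.ext
  rw [← descList_coe, ← descList_coe, h]

theorem descList_sorted (μ : Nat.Partition n) : (descList μ).Pairwise (· ≥ ·) := by
  unfold descList
  rw [List.pairwise_reverse]
  exact Multiset.pairwise_sort _ _

theorem descList_pos (μ : Nat.Partition n) {a : ℕ} (h : a ∈ descList μ) : 0 < a := by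
  rw [← Multiset.mem_coe, descList_coe] at h
  exact μ.parts_pos h

theorem get_pos (μ : Nat.Partition n) (j) : 0 < (descList μ).get j :=
  descList_pos μ (List.get_mem _ _)

/-- The permutations of the boxes that preserve sizes. -/
def boxGroup (l : List ℕ) : Subgroup (Equiv.Perm (Fin l.length)) where
  carrier := {σ | ∀ j, l.get (σ j) = l.get j}
  mul_mem' := by
    intro a b ha hb j
    rw [Equiv.Perm.mul_apply, ha, hb]
  one_mem' := fun j => rfl
  inv_mem' := by
    intro a ha j
    have := ha (a⁻¹ j)
    have h2 : a (a⁻¹ j) = j := a.apply_symm_apply j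
    rw [h2] at this
    exact this.symm

theorem card_boxGroup (μ : Nat.Partition n) :
    Nat.card (boxGroup (descList μ)) = bNum μ := by
  have h := DomMulAct.stabilizer_card' (descList μ).get
  have e : Nat.card (boxGroup (descList μ)) =
      Fintype.card {g : Equiv.Perm (Fin (descList μ).length) //
        (descList μ).get ∘ g = (descList μ).get} := by
    rw [← Nat.card_eq_fintype_card]
    exact Nat.card_congr (Equiv.subtypeEquivRight fun σ => by
      constructor
      · intro h; funext j; exact h j
      · intro h j; exact congrFun h j)
  rw [e, h, bNum]
  refine Finset.prod_congr ?_ ?_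
  · ext i
    rw [← map_descList_get]
    simp
  · intro i _
    congr 1
    rw [← map_descList_get, Multiset.count_map, Fintype.card_subtype, Finset.card_def,
      Finset.filter_val]
    congr 1
    apply Multiset.filter_congr
    intro x _
    exact eq_comm

/-- Valid fillings. -/
abbrev Fil (lam : Nat.Partition n) (g : Equiv.Perm (Fin n)) :=
  {f : Fin n → Fin (descList lam).length //
    (∀ x, f (g x) = f x) ∧
    ∀ j, (Finset.univ.filter fun x => f x = j).card = (descList lam).get j}

theorem permChar_eq (lam : Nat.Partition n) (g : Equiv.Perm (Fin n)) :
    permChar lam g = Nat.card (Fil lam g) := by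
  rw [Nat.card_eq_fintype_card]; rfl

theorem Fil.surj {lam : Nat.Partition n} {g : Equiv.Perm (Fin n)} (f : Fil lam g) :
    Function.Surjective f.1 := by
  intro j
  have h := f.2.2 j
  have : 0 < (Finset.univ.filter fun x => f.1 x = j).card := by rw [h]; exact get_pos _ _
  obtain ⟨x, hx⟩ := Finset.card_pos.1 this
  exact ⟨x, (Finset.mem_filter.1 hx).2⟩

/-- Permuting boxes of equal size. -/
def Fil.act {lam : Nat.Partition n} {g : Equiv.Perm (Fin n)} (σ : boxGroup (descList lam))
    (f : Fil lam g) : Fil lam g :=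
  ⟨fun x => σ.1 (f.1 x), fun x => congrArg σ.1 (f.2.1 x), fun j => by
    have h1 := f.2.2 (σ.1⁻¹ j)
    have h2 := σ⁻¹.2 j
    rw [← h2]
    refine Eq.trans ?_ h1
    congr 1
    ext x
    simp only [Finset.mem_filter, Finset.mem_univ, true_and]
    exact (Equiv.eq_symm_apply _).symm⟩

instance filAction (lam : Nat.Partition n) (g : Equiv.Perm (Fin n)) :
    MulAction (boxGroup (descList lam)) (Fil lam g) where
  smul := Fil.act
  one_smul f := rfl
  mul_smul a b f := rfl

theorem act_inj {lam : Nat.Partition n} {g : Equiv.Perm (Fin n)} (f : Fil lam g) :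
    Function.Injective fun σ : boxGroup (descList lam) => Fil.act σ f := by
  intro a b h
  apply Subtype.ext
  apply Equiv.ext
  intro j
  obtain ⟨x, rfl⟩ := f.surj j
  exact congrFun (congrArg Subtype.val h) x

theorem bNum_dvd (lam : Nat.Partition n) (g : Equiv.Perm (Fin n)) :
    bNum lam ∣ permChar lam g := by
  have hs : ∀ f : Fil lam g, MulAction.stabilizer (boxGroup (descList lam)) f = ⊥ := by
    intro f
    rw [Subgroup.eq_bot_iff_forall]
    intro σ hσ
    apply act_inj f
    exact hσ
  rw [permChar_eq, ← card_boxGroup,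
    Nat.card_congr (MulAction.selfEquivOrbitsQuotientProd hs), Nat.card_prod]
  exact dvd_mul_left _ _

theorem exists_equiv_of_map_eq {A B : Type} [Fintype A] [Fintype B] (u : A → ℕ) (v : B → ℕ)
    (h : (Finset.univ : Finset A).val.map u = (Finset.univ : Finset B).val.map v) :
    ∃ e : A ≃ B, ∀ a, v (e a) = u a := by
  have key : ∀ i, Nonempty ({a // u a = i} ≃ {b // v b = i}) := by
    intro i
    refine ⟨Fintype.equivOfCardEq ?_⟩
    have := congrArg (Multiset.count i) h
    rw [Multiset.count_map, Multiset.count_map, ← Finset.filter_val, ← Finset.filter_val,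
      ← Finset.card_def, ← Finset.card_def] at this
    rw [Fintype.card_subtype, Fintype.card_subtype]
    simpa only [eq_comm] using this
  exact ⟨Equiv.ofFiberEquiv fun i => (key i).some, fun a => Equiv.ofFiberEquiv_map _ a⟩

theorem cycleTypePartition_parts (g : Equiv.Perm (Fin n)) :
    (cycleTypePartition g).parts = g.partition.parts := by
  have : ∀ (m : ℕ) (h : m = n) (p : Nat.Partition m), (h ▸ p : Nat.Partition n).parts = p.parts := by
    intro m h p; subst h; rfl
  exact this _ _ _

theorem exists_perm (μ : Nat.Partition n) :
    ∃ g : Equiv.Perm (Fin n), cycleTypePartition g = μ := by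
  obtain ⟨g, hg⟩ := (Equiv.Perm.exists_with_cycleType_iff (Fin n)
    (m := μ.parts.filter fun i => 2 ≤ i)).2 ⟨by
      rw [Fintype.card_fin]
      have h := congrArg Multiset.sum (Multiset.filter_add_not (fun i => 2 ≤ i) μ.parts)
      rw [Multiset.sum_add, μ.parts_sum] at h
      omega, fun a ha => (Multiset.mem_filter.1 ha).2⟩
  refine ⟨g, ?_⟩
  apply Nat.Partition.ext
  rw [cycleTypePartition_parts, Equiv.Perm.parts_partition, hg]
  have h1 : (μ.parts.filter fun i => ¬ 2 ≤ i) =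
      Multiset.replicate (Multiset.card (μ.parts.filter fun i => ¬ 2 ≤ i)) 1 := by
    rw [Multiset.eq_replicate_card]
    intro b hb
    rw [Multiset.mem_filter] at hb
    have := μ.parts_pos hb.1
    omega
  have h2 := Multiset.filter_add_not (fun i => 2 ≤ i) μ.parts
  have h3 := congrArg Multiset.sum h2
  rw [Multiset.sum_add, h1, Multiset.sum_replicate, μ.parts_sum, smul_eq_mul, mul_one] at h3
  have h4 := Equiv.Perm.sum_cycleType g
  rw [hg] at h4
  have h5 : Fintype.card (Fin n) - g.support.card =
      Multiset.card (μ.parts.filter fun i => ¬ 2 ≤ i) := by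
    rw [Fintype.card_fin]; omega
  rw [h5, ← h1, h2]

/-- The orbit of a point. -/
def orb (g : Equiv.Perm (Fin n)) (x : Fin n) : Finset (Fin n) :=
  Finset.univ.filter fun y => g.SameCycle x y

theorem orb_eq_iff (g : Equiv.Perm (Fin n)) (x y : Fin n) :
    orb g x = orb g y ↔ g.SameCycle x y := by
  constructor
  · intro h
    have : y ∈ orb g y := by simp [orb, Equiv.Perm.SameCycle.refl]
    rw [← h] at this
    simpa [orb] using this
  · intro h
    ext z
    simp only [orb, Finset.mem_filter, Finset.mem_univ, true_and]
    exact ⟨fun h' => h.symm.trans h', fun h' => h.trans h'⟩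

theorem orb_of_mem (g : Equiv.Perm (Fin n)) (x : Fin n) (hx : x ∈ g.support) :
    orb g x = (g.cycleOf x).support := by
  ext y
  rw [Equiv.Perm.mem_support_cycleOf_iff]
  simp [orb, Equiv.Perm.mem_support.1 hx]

theorem orb_of_not_mem (g : Equiv.Perm (Fin n)) (x : Fin n) (hx : x ∉ g.support) :
    orb g x = {x} := by
  ext y
  have hfix : g x = x := by simpa using hx
  simp only [orb, Finset.mem_filter, Finset.mem_univ, true_and, Finset.mem_singleton]
  constructor
  · intro h
    exact (h.eq_of_left hfix).symm
  · rintro rfl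
    exact Equiv.Perm.SameCycle.refl _ _

theorem orbits_map_card (g : Equiv.Perm (Fin n)) :
    (Finset.univ.image (orb g)).val.map Finset.card = g.partition.parts := by
  have h1 : (Finset.univ : Finset (Fin n)) = g.support ∪ g.supportᶜ := by simp
  have h2 : g.support.image (orb g) = g.cycleFactorsFinset.image Equiv.Perm.support := by
    ext s
    simp only [Finset.mem_image]
    constructor
    · rintro ⟨x, hx, rfl⟩
      exact ⟨g.cycleOf x, Equiv.Perm.cycleOf_mem_cycleFactorsFinset_iff.2 hx,
        (orb_of_mem g x hx).symm⟩
    · rintro ⟨c, hc, rfl⟩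
      obtain ⟨x, hx⟩ := (Equiv.Perm.mem_cycleFactorsFinset_iff.1 hc).1.nonempty_support
      have hx' := Equiv.Perm.mem_cycleFactorsFinset_support_le hc hx
      refine ⟨x, hx', ?_⟩
      rw [orb_of_mem g x hx', ← (g.eq_cycleOf_of_mem_cycleFactorsFinset_iff c hc x).2 hx]
  have h3 : Set.InjOn Equiv.Perm.support (g.cycleFactorsFinset : Set (Equiv.Perm (Fin n))) := by
    intro c hc d hd h
    obtain ⟨x, hx⟩ := (Equiv.Perm.mem_cycleFactorsFinset_iff.1 hc).1.nonempty_support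
    rw [(g.eq_cycleOf_of_mem_cycleFactorsFinset_iff c hc x).2 hx]
    rw [h] at hx
    rw [(g.eq_cycleOf_of_mem_cycleFactorsFinset_iff d hd x).2 hx]
  have h4 : g.supportᶜ.image (orb g) = g.supportᶜ.image (fun x => {x}) := by
    apply Finset.image_congr
    intro x hx
    exact orb_of_not_mem g x (by simpa using hx)
  have hd : Disjoint (g.support.image (orb g)) (g.supportᶜ.image (orb g)) := by
    rw [Finset.disjoint_left]
    intro s hs ht
    obtain ⟨x, hx, rfl⟩ := Finset.mem_image.1 hs
    obtain ⟨y, hy, h⟩ := Finset.mem_image.1 ht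
    rw [Finset.mem_compl] at hy
    rw [orb_of_not_mem g y hy] at h
    have : x ∈ orb g x := by simp [orb, Equiv.Perm.SameCycle.refl]
    rw [← h, Finset.mem_singleton] at this
    exact hy (this ▸ hx)
  rw [h1, Finset.image_union, ← Finset.disjUnion_eq_union _ _ hd, Finset.disjUnion_val,
    Multiset.map_add, h2, h4, Equiv.Perm.parts_partition, Equiv.Perm.cycleType_def]
  congr 1
  · rw [Finset.image_val_of_injOn h3, Multiset.map_map]
  · rw [Finset.image_val_of_injOn (Finset.singleton_injective.injOn), Multiset.map_map]
    simp only [Function.comp_def, Finset.card_singleton, Multiset.map_const']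
    rw [← Finset.card_def, Finset.card_compl]

/-- The cycles of `g` as an abstract finite type. -/
theorem exists_model (g : Equiv.Perm (Fin n)) :
    ∃ (Q : Type) (_ : Fintype Q) (p : Fin n → Q), Function.Surjective p ∧
      (∀ x y, p x = p y ↔ g.SameCycle x y) ∧
      (Finset.univ : Finset Q).val.map (fun q => (Finset.univ.filter fun x => p x = q).card) =
        (cycleTypePartition g).parts := by
  refine ⟨{s // s ∈ Finset.univ.image (orb g)}, Finset.fintypeCoeSort _,
    fun x => ⟨orb g x, Finset.mem_image_of_mem _ (Finset.mem_univ x)⟩, ?_, ?_, ?_⟩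
  · rintro ⟨s, hs⟩
    obtain ⟨x, _, rfl⟩ := Finset.mem_image.1 hs
    exact ⟨x, rfl⟩
  · intro x y
    rw [Subtype.mk.injEq, orb_eq_iff]
  · rw [cycleTypePartition_parts, ← orbits_map_card]
    have : (Finset.univ.image (orb g)).val.map Finset.card =
      (Finset.univ.image (orb g)).val.attach.map (fun s => Finset.card s.1) := by
      exact (Multiset.attach_map_val' _ _).symm
    rw [this]
    refine Multiset.map_congr rfl ?_
    rintro ⟨s, hs⟩ _
    obtain ⟨x, _, rfl⟩ := Finset.mem_image.1 hs
    congr 1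
    ext y
    simp only [Finset.mem_filter, Finset.mem_univ, true_and, Subtype.mk.injEq]
    rw [orb_eq_iff]
    simp only [orb, Finset.mem_filter, Finset.mem_univ, true_and]
    exact Equiv.Perm.sameCycle_comm

theorem Fil.factor {lam : Nat.Partition n} {g : Equiv.Perm (Fin n)} (f : Fil lam g)
    {Q : Type} (p : Fin n → Q) (hp : Function.Surjective p)
    (hs : ∀ x y, p x = p y ↔ g.SameCycle x y) :
    ∃ h : Q → Fin (descList lam).length, ∀ x, h (p x) = f.1 x := by
  have hinv : ∀ x y, g.SameCycle x y → f.1 x = f.1 y := by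
    rintro x y ⟨i, rfl⟩
    induction i using Int.induction_on with
    | zero => simp
    | succ i ih => rw [ih, add_comm, zpow_add, zpow_one, Equiv.Perm.mul_apply, f.2.1]
    | pred i ih =>
      rw [ih, ← f.2.1 ((g ^ (-(i : ℤ) - 1)) x), ← Equiv.Perm.mul_apply, ← zpow_one_add]
      have h1 : 1 + (-(i : ℤ) - 1) = -i := by ring
      rw [h1]
  refine ⟨fun q => f.1 (hp q).choose, fun x => ?_⟩
  exact hinv _ _ ((hs _ _).1 (hp (p x)).choose_spec)

theorem permChar_self (g : Equiv.Perm (Fin n)) :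
    permChar (cycleTypePartition g) g = bNum (cycleTypePartition g) := by
  obtain ⟨Q, _, p, hp, hs, hm⟩ := exists_model g
  rw [← map_descList_get] at hm
  obtain ⟨e, he⟩ := exists_equiv_of_map_eq _ _ hm
  have hgx : ∀ x, p (g x) = p x := fun x => (hs _ _).2 (by
    rw [Equiv.Perm.sameCycle_apply_left])
  let f0 : Fil (cycleTypePartition g) g := ⟨fun x => e (p x), fun x => congrArg e (hgx x), fun j => by
    have := he (e.symm j)
    rw [Equiv.apply_symm_apply] at this
    rw [this]
    congr 1
    ext x
    simp [Equiv.eq_symm_apply]⟩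
  rw [permChar_eq, ← card_boxGroup]
  symm
  refine Nat.card_eq_of_bijective (fun σ => Fil.act σ f0) ⟨act_inj f0, ?_⟩
  intro f
  obtain ⟨h, hh⟩ := f.factor p hp hs
  have hsurj : Function.Surjective h := by
    intro j
    obtain ⟨x, hx⟩ := f.surj j
    exact ⟨p x, by rw [hh, hx]⟩
  have hbij : Function.Bijective h :=
    (Fintype.bijective_iff_surjective_and_card h).2 ⟨hsurj, Fintype.card_congr e⟩
  let e' := Equiv.ofBijective h hbij
  refine ⟨⟨e.symm.trans e', ?_⟩, ?_⟩
  · intro j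
    obtain ⟨q, rfl⟩ := e.surjective j
    have h1 := f.2.2 (h q)
    rw [he]
    simp only [Equiv.trans_apply, Equiv.symm_apply_apply]
    change (descList _).get (h q) = _
    rw [← h1]
    congr 1
    ext x
    simp [← hh, hbij.1.eq_iff]
  · apply Subtype.ext
    funext x
    change e' (e.symm (e (p x))) = f.1 x
    rw [Equiv.symm_apply_apply, ← hh]
    rfl

/-- The sum of the entries that are at least `t`. -/
def bigSum (t : ℕ) (l : List ℕ) : ℕ := (l.map fun a => if t ≤ a then a else 0).sum

theorem bigSum_lt_of_lex {l₁ l₂ : List ℕ} (h : List.Lex (· < ·) l₁ l₂)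
    (s₁ : l₁.Pairwise (· ≥ ·)) (s₂ : l₂.Pairwise (· ≥ ·)) (hp : ∀ a ∈ l₂, 0 < a) :
    ∃ t ∈ l₂, bigSum t l₁ < bigSum t l₂ := by
  induction h with
  | nil =>
    rename_i a l
    refine ⟨a, by simp, ?_⟩
    have := hp a (by simp)
    simp only [bigSum, List.map_nil, List.sum_nil, List.map_cons, List.sum_cons, le_refl, if_true]
    omega
  | cons h ih =>
    rename_i a l₁ l₂
    obtain ⟨t, ht, hlt⟩ := ih (List.pairwise_cons.1 s₁).2 (List.pairwise_cons.1 s₂).2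
      (fun b hb => hp b (by simp [hb]))
    refine ⟨t, by simp [ht], ?_⟩
    simp only [bigSum, List.map_cons, List.sum_cons] at hlt ⊢
    omega
  | rel h =>
    rename_i a l₁ b l₂
    refine ⟨b, by simp, ?_⟩
    have h0 : bigSum b (a :: l₁) = 0 := by
      unfold bigSum
      apply List.sum_eq_zero
      intro x hx
      obtain ⟨c, hc, rfl⟩ := List.mem_map.1 hx
      rw [if_neg]
      rcases List.mem_cons.1 hc with rfl | hc
      · omega
      · have := (List.pairwise_cons.1 s₁).1 c hc
        omega
    rw [h0]
    simp only [bigSum, List.map_cons, List.sum_cons, le_refl, if_true]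
    omega

theorem bigSum_descList (t : ℕ) (μ : Nat.Partition n) :
    bigSum t (descList μ) = (μ.parts.map fun a => if t ≤ a then a else 0).sum := by
  rw [← descList_coe, Multiset.map_coe, Multiset.sum_coe]
  rfl

theorem bigSum_le (lam : Nat.Partition n) (g : Equiv.Perm (Fin n)) (f : Fil lam g) (t : ℕ) :
    bigSum t (descList (cycleTypePartition g)) ≤ bigSum t (descList lam) := by
  obtain ⟨Q, _, p, hp, hs, hm⟩ := exists_model g
  obtain ⟨h, hh⟩ := f.factor p hp hs
  rw [bigSum_descList, bigSum_descList, ← hm, ← map_descList_get lam, Multiset.map_map,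
    Multiset.map_map]
  change ∑ q : Q, _ ≤ ∑ j, _
  rw [← Finset.sum_fiberwise_of_maps_to (g := h) (t := Finset.univ) (fun _ _ => Finset.mem_univ _)]
  apply Finset.sum_le_sum
  intro j _
  have hj : (descList lam).get j =
      ∑ q ∈ Finset.univ.filter (fun q => h q = j), (Finset.univ.filter fun x => p x = q).card := by
    rw [← f.2.2 j, Finset.card_eq_sum_card_fiberwise (f := p)
      (t := Finset.univ.filter (fun q => h q = j))]
    · apply Finset.sum_congr rfl
      intro q hq
      congr 1
      ext x
      simp only [Finset.mem_filter, Finset.mem_univ, true_and] at hq ⊢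
      rw [and_iff_right_iff_imp]
      rintro rfl
      rw [← hh, hq]
    · intro x hx
      simpa [hh] using hx
  simp only [Function.comp_apply]
  split_ifs with hc
  · rw [hj]
    apply Finset.sum_le_sum
    intro q _
    split_ifs <;> omega
  · apply le_of_eq
    apply Finset.sum_eq_zero
    intro q hq
    rw [if_neg]
    intro hle
    apply hc
    rw [hj]
    exact hle.trans (Finset.single_le_sum
      (f := fun q => (Finset.univ.filter fun x => p x = q).card) (fun _ _ => Nat.zero_le _) hq)

theorem le_of_permChar_ne_zero (lam : Nat.Partition n) (g : Equiv.Perm (Fin n))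
    (h : permChar lam g ≠ 0) : descList (cycleTypePartition g) ≤ descList lam := by
  rw [permChar_eq] at h
  obtain ⟨⟨f⟩, _⟩ := Nat.card_ne_zero.1 h
  by_contra hlt
  rw [not_le] at hlt
  obtain ⟨t, _, ht⟩ := bigSum_lt_of_lex hlt (descList_sorted _) (descList_sorted _)
    (fun a ha => descList_pos _ ha)
  exact absurd (bigSum_le lam g f t) (not_le.2 ht)

theorem plexLE_iff (μ ν : Nat.Partition n) : plexLE μ ν ↔ descList μ ≤ descList ν := by
  rw [le_iff_eq_or_lt, descList_injective.eq_iff]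
  rfl

theorem det_unitri {ι : Type} [Fintype ι] [DecidableEq ι] (M : Matrix ι ι ℤ) (b : ι → List ℕ)
    (hb : Function.Injective b) (h1 : ∀ i, M i i = 1) (h : ∀ i j, M i j ≠ 0 → b i ≤ b j) :
    M.det = 1 := by
  let _ : LinearOrder ι := LinearOrder.lift' b hb
  have ht : M.IsUpperTriangular := by
    intro i j hij
    by_contra hne
    exact absurd (h i j hne) (not_le.2 hij)
  have := Matrix.det_of_isUpperTriangular ht
  simp only [h1, Finset.prod_const_one] at this
  convert this

theorem bNum_pos (μ : Nat.Partition n) : 0 < bNum μ :=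
  Finset.prod_pos fun _ _ => Nat.factorial_pos _

/-- **Theorem 3.1 (Smith normal form part).** For a partition `α` of `n`, the Smith normal form
of the submatrix `X^(α) = (χ^λ_μ)_{λ,μ ≥ α}` of the character table of `S_n` equals the Smith
normal form of the diagonal matrix with entries `b_μ`, `μ ≥ α`; equivalently, the two matrices
are equivalent over `ℤ` via unimodular transformations. -/
theorem snf_large_submatrix (n : ℕ) (X : Nat.Partition n → Nat.Partition n → ℤ)
    (hX : IsCharTable X) (α : Nat.Partition n) :
    ∃ U V : Matrix {μ : Nat.Partition n // plexLE α μ} {μ : Nat.Partition n // plexLE α μ} ℤ,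
      IsUnit U.det ∧ IsUnit V.det ∧
      U * (Matrix.of fun lam mu : {μ : Nat.Partition n // plexLE α μ} => X lam.1 mu.1) * V =
        Matrix.diagonal fun μ : {μ : Nat.Partition n // plexLE α μ} => (bNum μ.1 : ℤ) := by
  obtain ⟨-, ⟨d, hd1, hd2, hd3⟩, -⟩ := hX
  choose γ hγ using exists_perm (n := n)
  choose T hT using fun lam g => bNum_dvd (n := n) lam g
  have hb : Function.Injective
      (fun μ : {μ : Nat.Partition n // plexLE α μ} => descList μ.1) := fun a b h =>
    Subtype.ext (descList_injective h)
  let D : Matrix {μ : Nat.Partition n // plexLE α μ} {μ : Nat.Partition n // plexLE α μ} ℤ :=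
    Matrix.of fun lam mu => d lam.1 mu.1
  let W : Matrix {μ : Nat.Partition n // plexLE α μ} {μ : Nat.Partition n // plexLE α μ} ℤ :=
    Matrix.of fun lam mu => (T lam.1 (γ mu.1) : ℤ)
  have hD : D.det = 1 := by
    refine det_unitri D _ hb (fun i => hd1 _) fun i j h => ?_
    exact (plexLE_iff _ _).1 (hd2 _ _ h)
  have hW : W.det = 1 := by
    rw [← Matrix.det_transpose]
    refine det_unitri W.transpose _ hb (fun i => ?_) fun i j h => ?_
    · have h1 := hT i.1 (γ i.1)
      have h2 := permChar_self (γ i.1)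
      rw [hγ] at h2
      rw [h2] at h1
      have h3 := Nat.eq_of_mul_eq_mul_left (bNum_pos i.1) ((mul_one _).trans h1)
      simp [W, ← h3]
    · have h0 : permChar j.1 (γ i.1) ≠ 0 := by
        rw [hT]
        refine mul_ne_zero (bNum_pos _).ne' ?_
        intro h'
        apply h
        simp [W, h']
      have := le_of_permChar_ne_zero _ _ h0
      rwa [hγ] at this
  have hP : D * (Matrix.of fun lam mu : {μ : Nat.Partition n // plexLE α μ} => X lam.1 mu.1) =
      Matrix.diagonal (fun μ : {μ : Nat.Partition n // plexLE α μ} => (bNum μ.1 : ℤ)) * W := by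
    ext lam mu
    rw [Matrix.diagonal_mul, Matrix.mul_apply]
    simp only [D, W, Matrix.of_apply]
    rw [← Nat.cast_mul, ← hT, hd3, hγ]
    rw [← Finset.sum_filter_of_ne (p := fun nu => plexLE α nu)]
    · symm
      exact Finset.sum_subtype _ (by simp) _
    · intro nu _ hne
      rw [plexLE_iff]
      exact ((plexLE_iff _ _).1 lam.2).trans
        ((plexLE_iff _ _).1 (hd2 _ _ (left_ne_zero_of_mul hne)))
  refine ⟨D, W⁻¹, by rw [hD]; exact isUnit_one, ?_, ?_⟩
  · rw [Matrix.det_nonsing_inv, hW]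
    simp
  · rw [hP, Matrix.mul_assoc, Matrix.mul_nonsing_inv _ (by rw [hW]; exact isUnit_one),
      Matrix.mul_one]

end SnTable
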